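/- Let g : [0,1] × ℝ → ℝⁿ be continuous, 1-periodic in the second variable, and suppose the partial derivative ∂ₓg exists and is continuous on [0,1] × ℝ. Then for all x ∈ [0,1] and ε > 0, ‖∫₀ˣ (g(y, y/ε) − ∫₀¹ g(y, z) dz) dy‖ ≤ 2ε(‖g‖_* + ‖∂ₓg‖_*). -/

import Mathlib

open Set

theorem stmt3 {n : ℕ} (g g' : ℝ → ℝ → EuclideanSpace ℝ (Fin n))
    (hg : ContinuousOn (fun p : ℝ × ℝ => g p.1 p.2) (Icc 0 1 ×ˢ (univ : Set ℝ)))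
    (hper : ∀ x ∈ Icc (0:ℝ) 1, ∀ y : ℝ, g x (y + 1) = g x y)
    (hderiv : ∀ x ∈ Icc (0:ℝ) 1, ∀ y : ℝ,
      HasDerivWithinAt (fun t => g t y) (g' x y) (Icc 0 1) x)
    (hg'cont : ContinuousOn (fun p : ℝ × ℝ => g' p.1 p.2) (Icc 0 1 ×ˢ (univ : Set ℝ)))
    (C C' : ℝ)
    (hC : ∀ x ∈ Icc (0:ℝ) 1, ∀ y : ℝ, ‖g x y‖ ≤ C)
    (hC' : ∀ x ∈ Icc (0:ℝ) 1, ∀ y : ℝ, ‖g' x y‖ ≤ C') :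
    ∀ x ∈ Icc (0:ℝ) 1, ∀ ε > (0:ℝ),
      ‖∫ y in (0:ℝ)..x, (g y (y / ε) - ∫ z in (0:ℝ)..1, g y z)‖ ≤ 2 * ε * (C + C') := by
  intro x hx ε hε
  have hC'0 : 0 ≤ C' := (norm_nonneg _).trans (hC' 0 (by simp) 0)
  have hC0 : 0 ≤ C := (norm_nonneg _).trans (hC 0 (by simp) 0)
  have hcont : ∀ a ∈ Icc (0:ℝ) 1, Continuous (g a) := by
    intro a ha
    have h : ContinuousOn (fun z : ℝ => g a z) univ :=
      hg.comp (f := fun z : ℝ => (a, z)) (by fun_prop) (fun z _ => ⟨ha, mem_univ _⟩)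
    exact continuousOn_univ.mp h
  have hlip : ∀ a ∈ Icc (0:ℝ) 1, ∀ b ∈ Icc (0:ℝ) 1, ∀ z, ‖g b z - g a z‖ ≤ C' * |b - a| := by
    intro a ha b hb z
    have := (convex_Icc (0:ℝ) 1).norm_image_sub_le_of_norm_hasDerivWithin_le
      (f := fun t => g t z) (f' := fun t => g' t z) (C := C')
      (fun t ht => hderiv t ht z) (fun t ht => hC' t ht z) ha hb
    simpa [Real.norm_eq_abs] using this
  set m : ℝ → EuclideanSpace ℝ (Fin n) := fun y => ∫ z in (0:ℝ)..1, g y z with hm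
  have hmlip : ∀ a ∈ Icc (0:ℝ) 1, ∀ b ∈ Icc (0:ℝ) 1, ‖m b - m a‖ ≤ C' * |b - a| := by
    intro a ha b hb
    simp only [hm]
    rw [← intervalIntegral.integral_sub ((hcont b hb).intervalIntegrable _ _)
      ((hcont a ha).intervalIntegrable _ _)]
    have := intervalIntegral.norm_integral_le_of_norm_le_const (a := 0) (b := 1)
      (f := fun z => g b z - g a z) (C := C' * |b - a|) (fun z _ => hlip a ha b hb z)
    simpa using this
  have hmbd : ∀ a ∈ Icc (0:ℝ) 1, ‖m a‖ ≤ C := by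
    intro a ha
    have := intervalIntegral.norm_integral_le_of_norm_le_const (a := 0) (b := 1)
      (f := fun z => g a z) (C := C) (fun z _ => hC a ha z)
    simpa using this
  have hmc : ContinuousOn m (Icc 0 1) := by
    have : LipschitzOnWith (Real.toNNReal C') m (Icc 0 1) := by
      apply LipschitzOnWith.of_dist_le_mul
      intro b hb a ha
      rw [dist_eq_norm, Real.dist_eq, Real.coe_toNNReal _ hC'0]
      exact hmlip a ha b hb
    exact this.continuousOn
  have hFc : ContinuousOn (fun y => g y (y / ε) - m y) (Icc 0 1) := by
    refine ContinuousOn.sub ?_ hmc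
    exact hg.comp (f := fun y : ℝ => (y, y / ε)) (by fun_prop) (fun z hz => ⟨hz, mem_univ _⟩)
  have hFi : ∀ a ∈ Icc (0:ℝ) 1, ∀ b ∈ Icc (0:ℝ) 1,
      IntervalIntegrable (fun y => g y (y / ε) - m y) MeasureTheory.volume a b := by
    intro a ha b hb
    exact (hFc.mono (uIcc_subset_Icc ha hb)).intervalIntegrable
  have hblock : ∀ a ∈ Icc (0:ℝ) 1, a + ε ∈ Icc (0:ℝ) 1 →
      ‖∫ y in a..(a + ε), (g y (y / ε) - m y)‖ ≤ 2 * C' * ε * ε := by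
    intro a ha hb
    have hc1 : Continuous (fun y => g a (y / ε)) := (hcont a ha).comp (by fun_prop)
    have hz : ∫ y in a..(a + ε), (g a (y / ε) - m a) = 0 := by
      rw [intervalIntegral.integral_sub (hc1.intervalIntegrable _ _) (by simp)]
      rw [intervalIntegral.integral_comp_div (g a) hε.ne']
      have h1 : (a + ε) / ε = a / ε + 1 := by field_simp
      have hp : Function.Periodic (g a) 1 := hper a ha
      rw [h1, hp.intervalIntegral_add_eq (a / ε) 0]
      simp [hm]
    have hc2 : Continuous (fun y => g a (y / ε) - m a) := hc1.sub continuous_const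
    have he : ∫ y in a..(a + ε), (g y (y / ε) - m y)
        = ∫ y in a..(a + ε), ((g y (y / ε) - m y) - (g a (y / ε) - m a)) := by
      rw [intervalIntegral.integral_sub (hFi a ha _ hb)
        (hc2.intervalIntegrable _ _), hz, sub_zero]
    rw [he]
    have := intervalIntegral.norm_integral_le_of_norm_le_const (a := a) (b := a + ε)
      (f := fun y => (g y (y / ε) - m y) - (g a (y / ε) - m a)) (C := 2 * C' * ε) ?_
    · simpa [abs_of_pos hε] using this
    · intro y hy
      rw [uIoc_of_le (by linarith)] at hy
      have hy1 : y ∈ Icc (0:ℝ) 1 := ⟨ha.1.trans hy.1.le, hy.2.trans hb.2⟩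
      have h1 := hlip a ha y hy1 (y / ε)
      have h2 := hmlip a ha y hy1
      have h3 : C' * |y - a| ≤ C' * ε := by
        apply mul_le_mul_of_nonneg_left _ hC'0
        rw [abs_of_pos (by linarith [hy.1])]
        linarith [hy.2]
      have h4 : (g y (y / ε) - m y) - (g a (y / ε) - m a)
        = (g y (y / ε) - g a (y / ε)) - (m y - m a) := by abel
      rw [h4]
      have := norm_sub_le (g y (y / ε) - g a (y / ε)) (m y - m a)
      linarith
  have hsum : ∀ k : ℕ, k * ε ≤ 1 →
      ‖∫ y in (0:ℝ)..(k * ε), (g y (y / ε) - m y)‖ ≤ k * (2 * C' * ε * ε) := by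
    intro k
    induction k with
    | zero => intro _; simp
    | succ k ih =>
      intro hk
      push_cast at hk ⊢
      have hk0 : 0 ≤ (k:ℝ) * ε := by positivity
      have e : ((k:ℝ) + 1) * ε = k * ε + ε := by ring
      rw [e] at hk ⊢
      have ha : (k:ℝ) * ε ∈ Icc (0:ℝ) 1 := ⟨hk0, by linarith⟩
      have hb : (k:ℝ) * ε + ε ∈ Icc (0:ℝ) 1 := ⟨by linarith, hk⟩
      rw [← intervalIntegral.integral_add_adjacent_intervals (hFi 0 (by simp) _ ha)
        (hFi _ ha _ hb)]
      have h1 := ih ha.2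
      have h2 := hblock _ ha hb
      refine (norm_add_le _ _).trans ?_
      linarith
  have hxe : 0 ≤ x / ε := div_nonneg hx.1 hε.le
  have hN1 : (⌊x / ε⌋₊ : ℝ) * ε ≤ x := (le_div_iff₀ hε).mp (Nat.floor_le hxe)
  have hN2 : x < ((⌊x / ε⌋₊ : ℝ) + 1) * ε := (div_lt_iff₀ hε).mp (Nat.lt_floor_add_one _)
  set N := ⌊x / ε⌋₊
  have ha : (N:ℝ) * ε ∈ Icc (0:ℝ) 1 := ⟨by positivity, hN1.trans hx.2⟩
  rw [← intervalIntegral.integral_add_adjacent_intervals (hFi 0 (by simp) _ ha) (hFi _ ha _ hx)]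
  have h1 := hsum N ha.2
  have h2 := intervalIntegral.norm_integral_le_of_norm_le_const (a := N * ε) (b := x)
      (f := fun y => g y (y / ε) - m y) (C := 2 * C) (by
        intro y hy
        rw [uIoc_of_le hN1] at hy
        have hy1 : y ∈ Icc (0:ℝ) 1 := ⟨ha.1.trans hy.1.le, hy.2.trans hx.2⟩
        have := norm_sub_le (g y (y / ε)) (m y)
        linarith [hC y hy1 (y / ε), hmbd y hy1])
  rw [abs_of_nonneg (by linarith)] at h2
  have h3 : 2 * C * (x - N * ε) ≤ 2 * C * ε :=
    mul_le_mul_of_nonneg_left (by linarith) (by positivity)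
  have h4 : (N * ε) * (2 * C' * ε) ≤ 1 * (2 * C' * ε) :=
    mul_le_mul_of_nonneg_right ha.2 (by positivity)
  refine (norm_add_le _ _).trans ?_
  linarith
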